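/- arXiv:quant-ph/0502138 — 4 statements merged into one kernel-verified Lean document; each statement's English description precedes it below -/
import Mathlib

section
/- For any two functions f, g : {0,1,…,n} → {1,…,n}, the inner product of the associated vectors satisfies ⟨ψ_f, ψ_g⟩ = (|Δ_{f,g}| − 1)/n, where Δ_{f,g} = {x : f(x) = g(x)} is the collision set of f and g. -/
open scoped ComplexInnerProductSpace ComplexConjugate BigOperators

/-- The tensor product `x ⊗ conj x'` of a vector with the componentwise conjugate of
another vector, viewed as a vector of `ℂ^n ⊗ ℂ^n ≅ ℂ^{n²}`. -/
noncomputable def tensConj {n : ℕ} (x x' : EuclideanSpace ℂ (Fin n)) :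
    EuclideanSpace ℂ (Fin n × Fin n) :=
  WithLp.toLp 2 fun p => x p.1 * conj (x' p.2)
/-- The state `φ = (1/√n) Σ_b v_b ⊗ conj v_b` built from a basis `v`. -/
noncomputable def meState {n : ℕ} (v : Fin n → EuclideanSpace ℂ (Fin n)) :
    EuclideanSpace ℂ (Fin n × Fin n) :=
  ((Real.sqrt n : ℂ))⁻¹ • ∑ b : Fin n, tensConj (v b) (v b)

/-- The state `ψ_f = -φ + γ_f` where `φ = (1/√n) Σ_b v_{0,b} ⊗ conj v_{0,b}` and
`γ_f = (1/√n) Σ_a v_{a,f(a)} ⊗ conj v_{a,f(a)}`. -/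
noncomputable def psiState {n : ℕ} (v : Fin (n + 1) → Fin n → EuclideanSpace ℂ (Fin n))
    (f : Fin (n + 1) → Fin n) : EuclideanSpace ℂ (Fin n × Fin n) :=
  -meState (v 0) +
    ((Real.sqrt n : ℂ))⁻¹ • ∑ a : Fin (n + 1), tensConj (v a (f a)) (v a (f a))

theorem inner_tensConj_self {n : ℕ} (x y : EuclideanSpace ℂ (Fin n)) :
    ⟪tensConj x x, tensConj y y⟫ = ((‖⟪x, y⟫‖ ^ 2 : ℝ) : ℂ) := by
  have h : ((‖⟪x, y⟫‖ ^ 2 : ℝ) : ℂ) = ⟪x, y⟫ * conj ⟪x, y⟫ := by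
    rw [Complex.mul_conj, Complex.normSq_eq_norm_sq]
  rw [h]
  simp only [tensConj, PiLp.inner_apply, RCLike.inner_apply, map_sum, map_mul,
    Finset.sum_mul_sum, Fintype.sum_prod_type, Complex.conj_conj]
  refine Finset.sum_congr rfl fun i _ => Finset.sum_congr rfl fun j _ => ?_
  ring

/-- for any two functions `f g : {0,…,n} → {1,…,n}`, the inner product of the
associated vectors is `⟨ψ_f, ψ_g⟩ = (|Δ_{f,g}| − 1)/n`, where `Δ_{f,g} = {x : f x = g x}`. -/
theorem inner_psiState_eq_collisions
    (n : ℕ) (hn : 1 ≤ n)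
    (v : Fin (n + 1) → Fin n → EuclideanSpace ℂ (Fin n))
    (horth : ∀ a, Orthonormal ℂ (v a))
    (hmub : ∀ a a', a ≠ a' → ∀ b b', ‖⟪v a b, v a' b'⟫‖ ^ 2 = 1 / n)
    (f g : Fin (n + 1) → Fin n) :
    ⟪psiState v f, psiState v g⟫ =
      (((Finset.univ.filter fun x => f x = g x).card : ℂ) - 1) / n := by
  have hn0 : (n : ℂ) ≠ 0 := by
    have : n ≠ 0 := by omega
    exact_mod_cast this
  have hG : ∀ a b a' b', ⟪tensConj (v a b) (v a b), tensConj (v a' b') (v a' b')⟫ =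
      if a = a' then (if b = b' then (1 : ℂ) else 0) else 1 / n := by
    intro a b a' b'
    rw [inner_tensConj_self]
    by_cases h : a = a'
    · subst h
      rw [orthonormal_iff_ite.mp (horth a) b b']
      by_cases hb : b = b' <;> simp [hb]
    · rw [hmub a a' h b b']
      simp [h]
  have h1 : ∀ (a a' : Fin (n + 1)) (b' : Fin n), ∑ b : Fin n, (if a = a' then (if b = b' then (1 : ℂ) else 0) else 1 / n) = 1 := by
    intro a a' b'
    by_cases h : a = a'
    · simp [h]
    · simp [h, hn0]
  have h2 : ∀ (a a' : Fin (n + 1)) (b : Fin n), ∑ b' : Fin n, (if a = a' then (if b = b' then (1 : ℂ) else 0) else 1 / n) = 1 := by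
    intro a a' b
    by_cases h : a = a'
    · simp [h]
    · simp [h, hn0]
  have hs : conj ((Real.sqrt n : ℂ))⁻¹ * ((Real.sqrt n : ℂ))⁻¹ = 1 / n := by
    rw [map_inv₀, Complex.conj_ofReal, ← mul_inv, ← Complex.ofReal_mul,
      Real.mul_self_sqrt (Nat.cast_nonneg n)]
    simp
  have hpsi : ∀ f, psiState v f = ((Real.sqrt n : ℂ))⁻¹ •
      (∑ a : Fin (n + 1), tensConj (v a (f a)) (v a (f a)) -
        ∑ b : Fin n, tensConj (v 0 b) (v 0 b)) := by
    intro f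
    rw [psiState, meState, smul_sub]
    abel
  have e1 : ∑ a : Fin (n + 1), ∑ a' : Fin (n + 1),
      (if a = a' then (if f a = g a' then (1 : ℂ) else 0) else 1 / n) =
      ((Finset.univ.filter fun x => f x = g x).card : ℂ) + (n + 1) := by
    have : ∀ a a' : Fin (n + 1),
        (if a = a' then (if f a = g a' then (1 : ℂ) else 0) else 1 / n) =
        (if a = a' then (if f a = g a then (1 : ℂ) else 0) - 1 / n else 0) + 1 / n := by
      intro a a'
      by_cases h : a = a'
      · subst h; simp
      · simp [h]
    simp only [this, Finset.sum_add_distrib, Finset.sum_ite_eq, Finset.mem_univ, if_true,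
      Finset.sum_sub_distrib, Finset.sum_boole, Finset.sum_const, Finset.card_univ,
      Fintype.card_fin, nsmul_eq_mul]
    push_cast
    field_simp
    ring
  have e2 : ∑ a : Fin (n + 1), ∑ b' : Fin n,
      (if a = 0 then (if f a = b' then (1 : ℂ) else 0) else 1 / n) = n + 1 := by
    simp only [h2]; simp
  have e3 : ∑ b : Fin n, ∑ a' : Fin (n + 1),
      (if 0 = a' then (if b = g a' then (1 : ℂ) else 0) else 1 / n) = n + 1 := by
    rw [Finset.sum_comm]; simp only [h1]; simp
  have e4 : ∑ b : Fin n, ∑ b' : Fin n,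
      (if True then (if b = b' then (1 : ℂ) else 0) else 1 / n) = n := by
    simp
  rw [hpsi, hpsi, inner_smul_left, inner_smul_right, ← mul_assoc, hs, inner_sub_left,
    inner_sub_right, inner_sub_right]
  simp only [sum_inner]
  simp only [inner_sum, hG]
  rw [e1, e2, e3, e4]
  ring
end

section
/- If f = f_{i,ℓ} and g = f_{i*,ℓ*} are two distinct functions in the family {f_{i,ℓ} : 1 ≤ i ≤ n, ℓ ∈ L_i}, then f and g have exactly one collision: |{a ∈ {0,1,…,n} : f(a) = g(a)}| = 1. -/
open scoped BigOperators

/-- An affine plane of order `n`, presented through its `n+1` parallel classes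
`L 0, …, L n` of lines on the point set `Fin n × Fin n` (an `(n², n²+n, n+1, n, 1)` design):
each class consists of `n` pairwise disjoint `n`-element lines covering all `n²` points,
distinct classes share no line, and every pair of distinct points lies on exactly one line
of the family. -/
structure IsAffinePlane (n : ℕ) (L : Fin (n + 1) → Finset (Finset (Fin n × Fin n))) :
    Prop where
  card_class : ∀ i, (L i).card = n
  card_line : ∀ i, ∀ ℓ ∈ L i, ℓ.card = n
  parallel_disjoint : ∀ i, ∀ ℓ ∈ L i, ∀ ℓ' ∈ L i, ℓ ≠ ℓ' → ℓ ∩ ℓ' = ∅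
  class_cover : ∀ i, ∀ p : Fin n × Fin n, ∃ ℓ ∈ L i, p ∈ ℓ
  classes_disjoint : ∀ i j, i ≠ j → ∀ ℓ ∈ L i, ℓ ∉ L j
  unique_line : ∀ p q : Fin n × Fin n, p ≠ q →
    ∃! ℓ : Finset (Fin n × Fin n), (∃ i, ℓ ∈ L i) ∧ p ∈ ℓ ∧ q ∈ ℓ

/-- let `L 0, …, L n` be the parallel classes of an affine plane of order `n`
whose class `L 0` consists of the "vertical" lines `ℓ_x = {(x,y) : y}`.  For a nonzero class
index (written `i.succ` with `i : Fin n`) and a line `ℓ ∈ L i.succ`, the associated function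
`f : {0,…,n} → {1,…,n}` satisfies `f 0 = i` and `(a, f a.succ) ∈ ℓ` for all `a`.  Any two
distinct such functions `f = f_{i,ℓ}` and `g = f_{i',ℓ'}` collide in exactly one place:
`|{a : f a = g a}| = 1`. -/
theorem affinePlane_functions_one_collision
    (n : ℕ) (L : Fin (n + 1) → Finset (Finset (Fin n × Fin n)))
    (hL : IsAffinePlane n L)
    (hL0 : L 0 = Finset.univ.image
      (fun x : Fin n => Finset.univ.filter (fun p : Fin n × Fin n => p.1 = x)))
    (i i' : Fin n) (ℓ ℓ' : Finset (Fin n × Fin n))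
    (hℓ : ℓ ∈ L i.succ) (hℓ' : ℓ' ∈ L i'.succ)
    (f g : Fin (n + 1) → Fin n)
    (hf0 : f 0 = i) (hf : ∀ a : Fin n, (a, f a.succ) ∈ ℓ)
    (hg0 : g 0 = i') (hg : ∀ a : Fin n, (a, g a.succ) ∈ ℓ')
    (hfg : f ≠ g) :
    (Finset.univ.filter fun a => f a = g a).card = 1 := by
  have fn : ∀ (j : Fin n) (m : Finset (Fin n × Fin n)), m ∈ L j.succ → ∀ a y y' : Fin n,
      (a, y) ∈ m → (a, y') ∈ m → y = y' := by
    intro j m hm a y y' h1 h2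
    by_contra hne
    have hv : (Finset.univ.filter (fun p : Fin n × Fin n => p.1 = a)) ∈ L 0 := by
      rw [hL0]; exact Finset.mem_image_of_mem _ (Finset.mem_univ a)
    have heq := (hL.unique_line (a, y) (a, y') (by simpa using hne)).unique
      ⟨⟨_, hm⟩, h1, h2⟩ ⟨⟨_, hv⟩, by simp, by simp⟩
    rw [heq] at hm
    exact hL.classes_disjoint 0 j.succ (Fin.succ_ne_zero j).symm _ hv hm
  have one : ∀ a b : Fin n, a ≠ b → f a.succ = g a.succ → f b.succ = g b.succ → ℓ = ℓ' := by
    intro a b hab ha hb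
    exact (hL.unique_line (a, f a.succ) (b, f b.succ) (by simp [hab])).unique
      ⟨⟨_, hℓ⟩, hf a, hf b⟩ ⟨⟨_, hℓ'⟩, ha ▸ hg a, hb ▸ hg b⟩
  rw [Finset.card_eq_one]
  by_cases hii : i = i'
  · subst hii
    have hne : ℓ ≠ ℓ' := by
      rintro rfl
      apply hfg
      funext a
      refine Fin.cases ?_ ?_ a
      · rw [hf0, hg0]
      · intro b
        exact fn i ℓ hℓ b _ _ (hf b) (hg b)
    have hd := hL.parallel_disjoint _ ℓ hℓ ℓ' hℓ' hne
    refine ⟨0, ?_⟩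
    ext a
    simp only [Finset.mem_filter, Finset.mem_univ, true_and, Finset.mem_singleton]
    refine Fin.cases ?_ ?_ a
    · simp [hf0, hg0]
    · intro b
      refine iff_of_false ?_ (Fin.succ_ne_zero b)
      intro h
      have : (b, f b.succ) ∈ ℓ ∩ ℓ' := Finset.mem_inter.2 ⟨hf b, h ▸ hg b⟩
      rw [hd] at this
      simp at this
  · have hs : i.succ ≠ i'.succ := fun h => hii (Fin.succ_injective _ h)
    have hne : ℓ ≠ ℓ' := by
      rintro rfl
      exact hL.classes_disjoint _ _ hs _ hℓ hℓ'
    choose m hm hmem using fun a : Fin n => hL.class_cover i'.succ (a, f a.succ)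
    have hinj : Function.Injective m := by
      intro a b hab
      by_contra hn
      have heq := (hL.unique_line (a, f a.succ) (b, f b.succ) (by simp [hn])).unique
        ⟨⟨_, hℓ⟩, hf a, hf b⟩ ⟨⟨_, hm a⟩, hmem a, hab ▸ hmem b⟩
      exact hL.classes_disjoint _ _ hs _ hℓ (heq ▸ hm a)
    have himg : Finset.univ.image m = L i'.succ := by
      apply Finset.eq_of_subset_of_card_le
      · intro x hx
        obtain ⟨a, -, rfl⟩ := Finset.mem_image.1 hx
        exact hm a
      · rw [Finset.card_image_of_injective _ hinj, hL.card_class]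
        simp
    rw [← himg] at hℓ'
    obtain ⟨a, -, ha⟩ := Finset.mem_image.1 hℓ'
    rw [himg] at hℓ'
    have hfa : f a.succ = g a.succ := fn i' ℓ' hℓ' a _ _ (ha ▸ hmem a) (hg a)
    refine ⟨a.succ, ?_⟩
    ext c
    simp only [Finset.mem_filter, Finset.mem_univ, true_and, Finset.mem_singleton]
    constructor
    · refine Fin.cases ?_ ?_ c
      · intro h
        exact absurd (by rw [← hf0, ← hg0, h]) hii
      · intro b hb
        by_contra hn
        exact hne (one a b (fun h => hn (by rw [h])) hfa hb)
    · rintro rfl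
      exact hfa
end

section
/- Let B_a = {v_{a,b} : 1 ≤ b ≤ n}, 0 ≤ a ≤ n, be n+1 mutually unbiased orthonormal bases of ℂ^n, and let (X, 𝓑) be an affine plane of order n with parallel classes L_0, …, L_n, where L_a = {ℓ_{a,b} : 1 ≤ b ≤ n}. Then the vectors |ℓ_{a,b}⟩ := v_{a,b} ⊗ conj(v_{a,b}) ∈ ℂ^{n²} form a realization of the affine plane: ⟨ℓ_{a,b}|ℓ_{a,b'}⟩ = δ_{b,b'} for lines in the same parallel class, and ⟨ℓ_{a,b}|ℓ_{a',b'}⟩ = 1/n = n/n² for lines from different parallel classes. -/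
open scoped ComplexInnerProductSpace ComplexConjugate BigOperators

/-- given `n+1` mutually unbiased orthonormal bases `B_a = {v a b}` of `ℂ^n`
and an affine plane of order `n` with parallel classes `L a = {line a b : b}`, the vectors
`|line a b⟩ := v_{a,b} ⊗ conj v_{a,b} ∈ ℂ^{n²}` form a realization of the affine plane:
`⟨line a b | line a b'⟩ = δ_{b,b'}` for lines in a common parallel class, and
`⟨line a b | line a' b'⟩ = 1/n = n/n²` for lines from different parallel classes. -/
theorem mub_tensConj_realization_of_affinePlane
    (n : ℕ) (hn : 1 ≤ n)
    (v : Fin (n + 1) → Fin n → EuclideanSpace ℂ (Fin n))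
    (horth : ∀ a, Orthonormal ℂ (v a))
    (hmub : ∀ a a', a ≠ a' → ∀ b b', ‖⟪v a b, v a' b'⟫‖ ^ 2 = 1 / n)
    (L : Fin (n + 1) → Finset (Finset (Fin n × Fin n)))
    (hL : IsAffinePlane n L)
    (line : Fin (n + 1) → Fin n → Finset (Fin n × Fin n))
    (hline : ∀ a b, line a b ∈ L a)
    (hline_inj : ∀ a, Function.Injective (line a)) :
    (∀ a : Fin (n + 1), ∀ b b' : Fin n,
      ⟪tensConj (v a b) (v a b), tensConj (v a b') (v a b')⟫ =
        if b = b' then 1 else 0) ∧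
    (∀ a a' : Fin (n + 1), a ≠ a' → ∀ b b' : Fin n,
      ⟪tensConj (v a b) (v a b), tensConj (v a' b') (v a' b')⟫ = 1 / n) ∧
    (1 / n : ℂ) = (n : ℂ) / (n ^ 2 : ℂ) := by
  have hn0 : (n : ℂ) ≠ 0 := by
    exact_mod_cast (by omega : n ≠ 0)
  refine ⟨fun a b b' => ?_, fun a a' h b b' => ?_, ?_⟩
  · rw [inner_tensConj_self, orthonormal_iff_ite.mp (horth a) b b']
    split_ifs <;> simp
  · rw [inner_tensConj_self, hmub a a' h b b']
    push_cast
    rfl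
  · field_simp
end

section
/- Let (X, 𝓑) be an affine resolvable design with a realization in ℂ^v and associated orthonormal basis {|ψ_p⟩ : p ∈ X}. Suppose B ∈ 𝓑 belongs to the parallel class 𝓒′, and suppose p ∈ X satisfies ⟨ψ_p | B⟩ ≠ 0. Then the unique block B′ ∈ 𝓒′ containing p equals B. (Hence Alice's answer, obtained by locating the block of the revealed parallel class through her observed point p, always coincides with the block measured by the King's men.) -/
open scoped BigOperators

/-- An affine resolvable `(v, b, r, k, λ)` design on the point set `X`, together with its
resolution into parallel classes: `blocks` is the family of `b` blocks, each a `k`-element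
subset of the `v`-element point set `X`; every point lies in exactly `r` blocks and every
pair of distinct points lies in exactly `lam` blocks.  The family `classes` partitions the
blocks into parallel classes, each consisting of pairwise disjoint blocks covering `X`,
and any two nonparallel blocks (blocks from different parallel classes) intersect in the
same number `m ≥ 1` of points. -/
structure IsAffineResolvableDesign {α : Type*} [DecidableEq α]
    (X : Finset α) (v b r k lam m : ℕ)
    (blocks : Finset (Finset α)) (classes : Finset (Finset (Finset α))) : Prop where
  card_points : X.card = v
  card_blocks : blocks.card = b
  block_subset : ∀ B ∈ blocks, B ⊆ X
  card_block : ∀ B ∈ blocks, B.card = k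
  point_replication : ∀ p ∈ X, (blocks.filter fun B => p ∈ B).card = r
  pair_replication : ∀ p ∈ X, ∀ q ∈ X, p ≠ q →
    (blocks.filter fun B => p ∈ B ∧ q ∈ B).card = lam
  class_subset : ∀ C ∈ classes, ∀ B ∈ C, B ∈ blocks
  unique_class : ∀ B ∈ blocks, ∃! C, C ∈ classes ∧ B ∈ C
  parallel_disjoint : ∀ C ∈ classes, ∀ B ∈ C, ∀ B' ∈ C, B ≠ B' → B ∩ B' = ∅
  class_cover : ∀ C ∈ classes, ∀ p ∈ X, ∃ B ∈ C, p ∈ B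
  m_pos : 1 ≤ m
  nonparallel_inter : ∀ C ∈ classes, ∀ C' ∈ classes, C ≠ C' →
    ∀ B ∈ C, ∀ B' ∈ C', (B ∩ B').card = m

open scoped ComplexInnerProductSpace

/-- A realization in `ℂ^v` of an affine resolvable design with block family `blocks`,
resolution `classes`, block size `k` and `v` points: a family of unit vectors `vec B`
indexed by the blocks with `⟨vec B, vec C⟩ = δ_{B,C}` for parallel blocks (blocks in a
common parallel class) and `⟨vec B, vec C⟩ = k/v` for nonparallel blocks. -/
def IsRealization {α : Type*} [DecidableEq α] [Fintype α] (v k : ℕ)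
    (blocks : Finset (Finset α)) (classes : Finset (Finset (Finset α)))
    (vec : Finset α → EuclideanSpace ℂ α) : Prop :=
  (∀ B ∈ blocks, ‖vec B‖ = 1) ∧
  (∀ C ∈ classes, ∀ B ∈ C, ∀ B' ∈ C,
    ⟪vec B, vec B'⟫ = if B = B' then 1 else 0) ∧
  (∀ C ∈ classes, ∀ C' ∈ classes, C ≠ C' → ∀ B ∈ C, ∀ B' ∈ C',
    ⟪vec B, vec B'⟫ = (k : ℂ) / v)

/-- let `{ψ p : p ∈ X}` be the orthonormal basis built from a realization of
an affine resolvable design (using a parallel class `𝓒`, `α = (r−1)√k/v`, `β = 1/√k`).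
If the block `B` belongs to the parallel class `𝓒'` and the point `p` satisfies
`⟨ψ p, vec B⟩ ≠ 0`, then any block `B'` of `𝓒'` containing `p` equals `B`: the unique
block of the revealed parallel class through the observed point `p` is the measured
block `B`. -/
theorem block_of_point_eq_measured_block {α : Type*} [DecidableEq α] [Fintype α]
    (v b r k lam m : ℕ)
    (blocks : Finset (Finset α)) (classes : Finset (Finset (Finset α)))
    (D : IsAffineResolvableDesign (Finset.univ : Finset α) v b r k lam m blocks classes)
    (vec : Finset α → EuclideanSpace ℂ α)
    (hvec : IsRealization v k blocks classes vec)
    (C : Finset (Finset α)) (hC : C ∈ classes)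
    (ψ : α → EuclideanSpace ℂ α)
    (hψ : ∀ p : α, ψ p =
      -((((r : ℝ) - 1) * Real.sqrt k / v) • ∑ B ∈ C, vec B) +
        ((Real.sqrt k)⁻¹ • ∑ B ∈ blocks.filter (fun B => p ∈ B), vec B))
    (C' : Finset (Finset α)) (hC' : C' ∈ classes)
    (B : Finset α) (hB : B ∈ C')
    (p : α) (hne : ⟪ψ p, vec B⟫ ≠ 0)
    (B' : Finset α) (hB' : B' ∈ C') (hpB' : p ∈ B') :
    B' = B := by
  by_contra hBB
  obtain ⟨-, hpar, hnon⟩ := hvec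
  apply hne
  have hpB : p ∉ B := by
    intro hp
    have h := D.parallel_disjoint C' hC' B' hB' B hB hBB
    have h2 : p ∈ B' ∩ B := Finset.mem_inter.mpr ⟨hpB', hp⟩
    rw [h] at h2
    simp at h2
  have hk : 0 < k := by
    rw [← D.card_block B' (D.class_subset C' hC' B' hB')]
    exact Finset.card_pos.mpr ⟨p, hpB'⟩
  have hv : 0 < v := by
    rw [← D.card_points]
    exact Finset.card_pos.mpr ⟨p, Finset.mem_univ p⟩
  have hcard : C.card * k = v := by
    have hU : C.biUnion id = (Finset.univ : Finset α) := by
      ext q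
      simpa using D.class_cover C hC q (Finset.mem_univ q)
    rw [← D.card_points, ← hU, Finset.card_biUnion]
    · rw [Finset.sum_const_nat (m := k)]
      intro A hA
      exact D.card_block A (D.class_subset C hC A hA)
    · intro A hA A' hA' hne'
      exact Finset.disjoint_iff_inter_eq_empty.mpr (D.parallel_disjoint C hC A hA A' hA' hne')
  have hvC : (v : ℂ) ≠ 0 := by exact_mod_cast hv.ne'
  have hS1 : ∑ A ∈ C, ⟪vec A, vec B⟫ = (1 : ℂ) := by
    by_cases hCC : C = C'
    · subst hCC
      rw [Finset.sum_congr rfl (fun A hA => hpar C hC A hA B hB)]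
      simp [hB]
    · rw [Finset.sum_congr rfl (fun A hA => hnon C hC C' hC' hCC A hA B hB)]
      rw [Finset.sum_const, nsmul_eq_mul, ← mul_div_assoc, div_eq_one_iff_eq hvC]
      exact_mod_cast hcard
  have hmem : B' ∈ blocks.filter (fun A => p ∈ A) :=
    Finset.mem_filter.mpr ⟨D.class_subset C' hC' B' hB', hpB'⟩
  have hr : 1 + ((blocks.filter (fun A => p ∈ A)).erase B').card = r := by
    rw [← D.point_replication p (Finset.mem_univ p), add_comm]
    exact Finset.card_erase_add_one hmem
  have hS2 : ∑ A ∈ blocks.filter (fun A => p ∈ A), ⟪vec A, vec B⟫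
      = ((r : ℂ) - 1) * ((k : ℂ) / v) := by
    rw [← Finset.add_sum_erase _ _ hmem, hpar C' hC' B' hB' B hB, if_neg hBB, zero_add]
    have hc : ∀ A ∈ (blocks.filter (fun A => p ∈ A)).erase B',
        ⟪vec A, vec B⟫ = (k : ℂ) / v := by
      intro A hA
      rw [Finset.mem_erase, Finset.mem_filter] at hA
      obtain ⟨hAB, hAb, hpA⟩ := hA
      obtain ⟨E, ⟨hE, hAE⟩, -⟩ := D.unique_class A hAb
      refine hnon E hE C' hC' ?_ A hAE B hB
      rintro rfl
      have h := D.parallel_disjoint E hE A hAE B' hB' hAB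
      have h2 : p ∈ A ∩ B' := Finset.mem_inter.mpr ⟨hpA, hpB'⟩
      rw [h] at h2
      simp at h2
    rw [Finset.sum_congr rfl hc, Finset.sum_const, nsmul_eq_mul, ← hr]
    push_cast
    ring
  have hs : ((Real.sqrt k : ℝ) : ℂ) ≠ 0 := by
    exact_mod_cast (Real.sqrt_pos.mpr (by exact_mod_cast hk : (0 : ℝ) < k)).ne'
  have hss : ((Real.sqrt k : ℝ) : ℂ) * (Real.sqrt k : ℝ) = (k : ℂ) := by
    exact_mod_cast Real.mul_self_sqrt (Nat.cast_nonneg k : (0 : ℝ) ≤ k)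
  rw [hψ, ← Complex.coe_smul, ← Complex.coe_smul, inner_add_left, inner_neg_left,
    inner_smul_left, inner_smul_left, sum_inner, sum_inner, hS1, hS2,
    Complex.conj_ofReal, Complex.conj_ofReal]
  push_cast
  rw [← hss]
  field_simp
  ring
end
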